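/- arXiv:1908.09385 — 3 statements merged into one kernel-verified Lean document; each statement's English description precedes it below -/
import Mathlib

section
/- Let b = sqrt(3/8) and define Ω(x) = -2bx/(x²+b²)², U(x) = x/(x²+b²) and U_x(x) = (b²-x²)/(x²+b²)². Then (i) U is differentiable on ℝ with U'(x) = U_x(x) for all x ∈ ℝ, and (ii) Ω is differentiable and satisfies the self-similar profile equation ( (x/3) + (1/2)·U(x) ) · Ω'(x) = ( -1 + U_x(x) ) · Ω(x) for all x ∈ ℝ. -/
open Real

noncomputable def bb : ℝ := Real.sqrt (3/8)

noncomputable def Ω (x : ℝ) : ℝ := -2 * bb * x / (x^2 + bb^2)^2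

noncomputable def U (x : ℝ) : ℝ := x / (x^2 + bb^2)

noncomputable def Ux (x : ℝ) : ℝ := (bb^2 - x^2) / (x^2 + bb^2)^2

/-!
Put `q = x² + c`. Both profiles are quotients `x / q ^ n`, so after their derivatives are inserted,
the powers of `q` cleared and `x²` replaced by `q - c`, the profile equation
`(c_l x + U / 2) Ω' = (c_ω + U') Ω` becomes a polynomial identity in `q`, with sides
`(c_l q + 1/2) (4c - 3q)` and `c_ω q² + 2c - q`. The constant terms agree because `a = 1/2`, the
quadratic ones force `c_ω = -3 c_l`, and the linear ones force `8 c_l c = 1`; thus `c_l = 1/3` gives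
`c = 3/8`.
-/

theorem hasDerivAt_div_sq_add_const_pow {𝕜 : Type*} [NontriviallyNormedField 𝕜] {c x : 𝕜}
    (hq : x ^ 2 + c ≠ 0) (n : ℕ) :
    HasDerivAt (fun y => y / (y ^ 2 + c) ^ n)
      ((c - (2 * n - 1) * x ^ 2) / (x ^ 2 + c) ^ (n + 1)) x := by
  have hbase : HasDerivAt (fun y => y ^ 2 + c) (2 * x) x := by
    simpa using (hasDerivAt_pow 2 x).add_const c
  refine ((hasDerivAt_id' x).fun_div (hbase.fun_pow n) (pow_ne_zero n hq)).congr_deriv ?_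
  cases n with
  | zero => simp [hq, add_comm c]
  | succ n =>
    rw [Nat.add_sub_cancel]
    field_simp
    push_cast
    ring

theorem profile_polynomial_identity {R : Type*} [CommRing R] {cl c : R} (hc : 8 * cl * c = 1)
    (x : R) :
    (2 * cl * (x ^ 2 + c) + 1) * (c - 3 * x ^ 2) =
      2 * (-3 * cl * (x ^ 2 + c) ^ 2 + (c - x ^ 2)) := by
  linear_combination (x ^ 2 + c) * hc

theorem profile_rational_identity {K : Type*} [Field K] {cl c x : K} (hc : 8 * cl * c = 1)
    (hq : x ^ 2 + c ≠ 0) (A : K) :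
    (cl * x + 1 / 2 * (x / (x ^ 2 + c))) * (A * ((c - 3 * x ^ 2) / (x ^ 2 + c) ^ 3)) =
      (-3 * cl + (c - x ^ 2) / (x ^ 2 + c) ^ 2) * (A * x / (x ^ 2 + c) ^ 2) := by
  have h2 : (2 : K) ≠ 0 := fun h =>
    one_ne_zero (α := K) (by linear_combination 4 * cl * c * h - hc)
  calc
    _ = A * x * ((2 * cl * (x ^ 2 + c) + 1) * (c - 3 * x ^ 2)) / (2 * (x ^ 2 + c) ^ 4) := by
      field_simp
    _ = A * x * (2 * (-3 * cl * (x ^ 2 + c) ^ 2 + (c - x ^ 2))) / (2 * (x ^ 2 + c) ^ 4) := by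
      rw [profile_polynomial_identity hc]
    _ = _ := by field_simp

theorem selfSimilar_profile_a_half_general {𝕜 : Type*} [NontriviallyNormedField 𝕜]
    {cl cω c x : 𝕜} (hω : cω = -3 * cl) (hc : 8 * cl * c = 1) (hq : x ^ 2 + c ≠ 0) (A : 𝕜) :
    HasDerivAt (fun y => y / (y ^ 2 + c)) ((c - x ^ 2) / (x ^ 2 + c) ^ 2) x ∧
    DifferentiableAt 𝕜 (fun y => A * y / (y ^ 2 + c) ^ 2) x ∧
    (cl * x + 1 / 2 * (x / (x ^ 2 + c))) * deriv (fun y => A * y / (y ^ 2 + c) ^ 2) x =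
      (cω + (c - x ^ 2) / (x ^ 2 + c) ^ 2) * (A * x / (x ^ 2 + c) ^ 2) := by
  have hU : HasDerivAt (fun y => y / (y ^ 2 + c)) ((c - x ^ 2) / (x ^ 2 + c) ^ 2) x := by
    simpa only [pow_one] using
      (hasDerivAt_div_sq_add_const_pow hq 1).congr_deriv (by norm_num)
  have hΩ : HasDerivAt (fun y => A * y / (y ^ 2 + c) ^ 2)
      (A * ((c - 3 * x ^ 2) / (x ^ 2 + c) ^ 3)) x := by
    simpa only [mul_div_assoc] using
      ((hasDerivAt_div_sq_add_const_pow hq 2).congr_deriv (by push_cast; ring)).const_mul A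
  refine ⟨hU, hΩ.differentiableAt, ?_⟩
  rw [hΩ.deriv, hω, profile_rational_identity hc hq]

theorem bb_sq : bb ^ 2 = 3 / 8 :=
  Real.sq_sqrt (by norm_num)

/-- The explicit analytic self-similar profile of gCLM with `a = 1/2`:
`U` has derivative `Ux`, `Ω` is differentiable, and the self-similar profile
equation `(x/3 + U/2) Ω' = (-1 + Ux) Ω` holds. -/
theorem selfSimilar_profile_a_half :
    (∀ x : ℝ, HasDerivAt U (Ux x) x) ∧
    Differentiable ℝ Ω ∧
    (∀ x : ℝ, (x / 3 + (1/2) * U x) * deriv Ω x = (-1 + Ux x) * Ω x) := by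
  have profile (x : ℝ) := selfSimilar_profile_a_half_general (cl := 3⁻¹) (cω := -1) (c := bb ^ 2)
    (x := x) (by norm_num) (by norm_num [bb_sq]) (by rw [bb_sq]; positivity) (-2 * bb)
  exact ⟨fun x => (profile x).1, fun x => (profile x).2.1, fun x => by
    rw [div_eq_inv_mul x 3]; exact (profile x).2.2⟩
end

section
/- (Tricomi identity) Let ω: ℝ → ℝ be a Schwartz function. Then for every x ∈ ℝ, H(ω·Hω)(x) = (1/2)·( (Hω)(x)² − ω(x)² ), where both Hilbert transforms are defined by the principal value formula and all the principal value limits involved exist. -/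
open MeasureTheory Filter Real Set

/-- `HilbertAt f x L` means the principal-value Hilbert transform
`(1/π) P.V. ∫ f(y)/(x-y) dy` exists at `x` and equals `L`. -/
def HilbertAt (f : ℝ → ℝ) (x L : ℝ) : Prop :=
  Filter.Tendsto
    (fun ε : ℝ => (1 / Real.pi) * ∫ y in {y : ℝ | ε < |x - y|}, f y / (x - y))
    (nhdsWithin 0 (Set.Ioi 0)) (nhds L)

/-!
Write `ω` as a superposition of plane waves `e^{ipx}`. Folding the truncated principal value to
`∫_ε^∞ (f(x - t) - f(x + t)) dt / t` turns each wave into `-2i e^{ipx} ∫_ε^∞ sin(pt) dt / t`, so by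
the Dirichlet integral `H` multiplies its amplitude by `m(p) = -i sgn p`; this holds for every
integrable superposition, over any measure space of frequencies. A product of two superpositions is
a superposition over the product space, in which frequencies add, and the Tricomi identity becomes
`m(p + q) (m(p) + m(q)) = m(p) m(q) - 1` for nonzero `p` and `q`.
-/

open scoped Topology FourierTransform

/-- The sine integral `Si`, normalised by `Si 0 = 0`. -/
noncomputable def sineIntegral (u : ℝ) : ℝ := ∫ t in 0..u, sinc t

lemma continuous_sineIntegral : Continuous sineIntegral :=
  intervalIntegral.continuous_primitive (fun _ _ => continuous_sinc.intervalIntegrable _ _) 0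

@[simp]
lemma sineIntegral_zero : sineIntegral 0 = 0 := intervalIntegral.integral_same

@[simp]
lemma sineIntegral_neg (u : ℝ) : sineIntegral (-u) = -sineIntegral u := by
  have h := intervalIntegral.integral_comp_neg (a := 0) (b := u) sinc
  simp only [sinc_neg, neg_zero] at h
  rw [sineIntegral, sineIntegral, h, intervalIntegral.integral_symm]

lemma abs_sineIntegral_le_abs (u : ℝ) : |sineIntegral u| ≤ |u| := by
  simpa [sineIntegral] using intervalIntegral.norm_integral_le_of_norm_le_const
    (a := 0) (b := u) (f := sinc) fun t _ => abs_sinc_le_one t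

lemma integral_Ioi_exp_neg_mul {t : ℝ} (ht : 0 < t) : ∫ s in Ioi (0 : ℝ), exp (-t * s) = t⁻¹ := by
  rw [integral_exp_mul_Ioi (neg_lt_zero.2 ht), mul_zero, exp_zero, neg_div_neg_eq, one_div]

lemma integral_exp_neg_mul_mul_sin (s R : ℝ) :
    ∫ t in 0..R, exp (-t * s) * sin t =
      (1 + s ^ 2)⁻¹ - exp (-R * s) * ((cos R + s * sin R) / (1 + s ^ 2)) := by
  have hderiv : ∀ t ∈ uIcc 0 R, HasDerivAt
      (fun t => -(exp (-t * s) * (cos t + s * sin t) / (1 + s ^ 2))) (exp (-t * s) * sin t) t := by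
    intro t _
    have hexp : HasDerivAt (fun t : ℝ => exp (-t * s)) (exp (-t * s) * (-1 * s)) t :=
      ((hasDerivAt_id t).neg.mul_const s).exp
    have htrig : HasDerivAt (fun t : ℝ => cos t + s * sin t) (-sin t + s * cos t) t :=
      (hasDerivAt_cos t).add ((hasDerivAt_sin t).const_mul s)
    refine ((hexp.mul htrig).div_const (1 + s ^ 2)).neg.congr_deriv ?_
    have : 1 + s ^ 2 ≠ 0 := by positivity
    field_simp
    ring
  rw [intervalIntegral.integral_eq_sub_of_hasDerivAt hderiv
    (Continuous.intervalIntegrable (by fun_prop) _ _)]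
  simp
  ring

lemma abs_cos_add_mul_sin_div_le_one (s R : ℝ) : |(cos R + s * sin R) / (1 + s ^ 2)| ≤ 1 := by
  have hcs : (cos R + s * sin R) ^ 2 ≤ 1 + s ^ 2 := by
    nlinarith [sq_nonneg (s * cos R - sin R), sin_sq_add_cos_sq R]
  rw [abs_div, abs_of_pos (by positivity : 0 < 1 + s ^ 2)]
  refine div_le_one_of_le₀ (abs_le_of_sq_le_sq ?_ (by positivity)) (by positivity)
  nlinarith [sq_nonneg s]

lemma integrable_exp_neg_mul_mul_sin {R : ℝ} :
    Integrable (Function.uncurry fun t s : ℝ => exp (-t * s) * sin t)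
      ((volume.restrict (Ioc 0 R)).prod (volume.restrict (Ioi 0))) := by
  rw [integrable_prod_iff (Continuous.aestronglyMeasurable (by fun_prop))]
  constructor
  · filter_upwards [ae_restrict_mem measurableSet_Ioc] with t ht
    exact (integrableOn_exp_mul_Ioi (neg_lt_zero.2 ht.1) 0).mul_const (sin t)
  · have hsinc : IntegrableOn (fun t => |sinc t|) (Ioc 0 R) := integrable_sinc.abs
    refine hsinc.congr ?_
    filter_upwards [ae_restrict_mem measurableSet_Ioc] with t ht
    simp only [Function.uncurry_apply_pair, norm_mul, norm_eq_abs, abs_exp]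
    rw [integral_mul_const, integral_Ioi_exp_neg_mul ht.1, sinc_of_ne_zero ht.1.ne', abs_div,
      abs_of_pos ht.1, div_eq_inv_mul]

lemma integrableOn_exp_neg_mul_mul_cos_add {R : ℝ} (hR : 0 < R) :
    IntegrableOn (fun s => exp (-R * s) * ((cos R + s * sin R) / (1 + s ^ 2))) (Ioi 0) :=
  (integrableOn_exp_mul_Ioi (neg_lt_zero.2 hR) 0).mul_bdd (c := 1)
    (Measurable.aestronglyMeasurable (by fun_prop))
    (Eventually.of_forall fun s => abs_cos_add_mul_sin_div_le_one s R)

/- Fubini applied to `exp (-t s) sin t` on `(0, R] × (0, ∞)`: integrating in `s` first gives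
`sin t / t`, integrating in `t` first gives the right-hand side. -/
lemma sineIntegral_eq_pi_div_two_sub {R : ℝ} (hR : 0 < R) :
    sineIntegral R =
      π / 2 - ∫ s in Ioi 0, exp (-R * s) * ((cos R + s * sin R) / (1 + s ^ 2)) := by
  calc sineIntegral R = ∫ t in Ioc 0 R, ∫ s in Ioi 0, exp (-t * s) * sin t := by
        rw [sineIntegral, intervalIntegral.integral_of_le hR.le]
        refine setIntegral_congr_fun measurableSet_Ioc fun t ht => ?_
        rw [integral_mul_const, integral_Ioi_exp_neg_mul ht.1, sinc_of_ne_zero ht.1.ne',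
          div_eq_inv_mul]
    _ = ∫ s in Ioi 0, ∫ t in 0..R, exp (-t * s) * sin t := by
        rw [integral_integral_swap integrable_exp_neg_mul_mul_sin]
        simp_rw [intervalIntegral.integral_of_le hR.le]
    _ = _ := by
        simp_rw [integral_exp_neg_mul_mul_sin]
        rw [integral_sub integrable_inv_one_add_sq.integrableOn
          (integrableOn_exp_neg_mul_mul_cos_add hR), integral_Ioi_inv_one_add_sq, arctan_zero,
          sub_zero]

lemma abs_sineIntegral_sub_pi_div_two_le {R : ℝ} (hR : 0 < R) :
    |sineIntegral R - π / 2| ≤ R⁻¹ := by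
  rw [sineIntegral_eq_pi_div_two_sub hR, sub_sub_cancel_left, abs_neg,
    ← integral_Ioi_exp_neg_mul hR, ← norm_eq_abs]
  refine norm_integral_le_of_norm_le (integrableOn_exp_mul_Ioi (neg_lt_zero.2 hR) 0)
    (Eventually.of_forall fun s => ?_)
  rw [norm_mul, norm_eq_abs, abs_exp]
  exact mul_le_of_le_one_right (exp_pos _).le (abs_cos_add_mul_sin_div_le_one s R)

lemma tendsto_sineIntegral_atTop : Tendsto sineIntegral atTop (𝓝 (π / 2)) := by
  rw [tendsto_iff_norm_sub_tendsto_zero]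
  refine squeeze_zero' (Eventually.of_forall fun _ => norm_nonneg _) ?_ tendsto_inv_atTop_zero
  filter_upwards [eventually_gt_atTop 0] with R hR using abs_sineIntegral_sub_pi_div_two_le hR

lemma abs_sineIntegral_le (u : ℝ) : |sineIntegral u| ≤ π / 2 + 1 := by
  wlog hu : 0 ≤ u generalizing u
  · simpa using this (-u) (by linarith)
  rcases le_total u 1 with h | h
  · calc |sineIntegral u| ≤ |u| := abs_sineIntegral_le_abs u
      _ ≤ π / 2 + 1 := by rw [abs_of_nonneg hu]; linarith [pi_pos]
  · have hsub := abs_le.1 (abs_sineIntegral_sub_pi_div_two_le (by linarith : 0 < u))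
    have hinv : u⁻¹ ≤ 1 := inv_le_one_of_one_le₀ h
    exact abs_le.2 ⟨by linarith [pi_pos], by linarith⟩

lemma tendsto_sineIntegral_mul_const (p : ℝ) :
    Tendsto (fun R => sineIntegral (R * p)) atTop (𝓝 (π / 2 * Real.sign p)) := by
  rcases lt_trichotomy p 0 with h | rfl | h
  · have hlim : Tendsto (fun R : ℝ => R * -p) atTop atTop :=
      tendsto_id.atTop_mul_const (neg_pos.2 h)
    simpa [Function.comp_def, Real.sign_of_neg h] using (tendsto_sineIntegral_atTop.comp hlim).neg
  · simp
  · have hlim : Tendsto (fun R : ℝ => R * p) atTop atTop := tendsto_id.atTop_mul_const h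
    simpa [Function.comp_def, Real.sign_of_pos h] using tendsto_sineIntegral_atTop.comp hlim

lemma integral_sin_mul_div (p : ℝ) {ε R : ℝ} (hε : 0 < ε) (hR : ε ≤ R) :
    ∫ t in ε..R, sin (t * p) / t = sineIntegral (R * p) - sineIntegral (ε * p) := by
  calc ∫ t in ε..R, sin (t * p) / t = p * ∫ t in ε..R, sinc (t * p) := by
        rw [← intervalIntegral.integral_const_mul]
        refine intervalIntegral.integral_congr fun t ht => ?_
        have ht : t ≠ 0 := (hε.trans_le (uIcc_of_le hR ▸ ht).1).ne'
        rcases eq_or_ne p 0 with rfl | hp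
        · simp
        · simp only [sinc_of_ne_zero (mul_ne_zero ht hp)]
          field_simp
    _ = ∫ t in ε * p..R * p, sinc t := intervalIntegral.mul_integral_comp_mul_right p
    _ = sineIntegral (R * p) - sineIntegral (ε * p) :=
        (intervalIntegral.integral_interval_sub_left (continuous_sinc.intervalIntegrable _ _)
          (continuous_sinc.intervalIntegrable _ _)).symm

section PrincipalValue

variable {E : Type*} [NormedAddCommGroup E] [NormedSpace ℝ E]

/-- The Hilbert transform truncated at distance `ε` from its singularity. -/
noncomputable def truncatedHilbertTransform (ε : ℝ) (f : ℝ → E) (x : ℝ) : E :=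
  π⁻¹ • ∫ y in {y | ε < |x - y|}, (x - y)⁻¹ • f y

/-- The vector-valued form of `HilbertAt`: the principal value Hilbert transform of `f` exists at
`x` and equals `L`. -/
def HasHilbertTransformAt (f : ℝ → E) (x : ℝ) (L : E) : Prop :=
  Tendsto (fun ε => truncatedHilbertTransform ε f x) (𝓝[>] 0) (𝓝 L)

lemma HasHilbertTransformAt.const_smul {𝕜 : Type*} [NormedField 𝕜] [NormedSpace 𝕜 E]
    [SMulCommClass ℝ 𝕜 E] {f : ℝ → E} {x : ℝ} {L : E} (h : HasHilbertTransformAt f x L) (c : 𝕜) :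
    HasHilbertTransformAt (fun y => c • f y) x (c • L) := by
  refine (Tendsto.const_smul h c).congr fun ε => ?_
  simp_rw [truncatedHilbertTransform, smul_comm _ c, integral_smul, smul_comm _ c]

lemma hasHilbertTransformAt_iff_hilbertAt {f : ℝ → ℝ} {x L : ℝ} :
    HasHilbertTransformAt f x L ↔ HilbertAt f x L := by
  simp only [HasHilbertTransformAt, truncatedHilbertTransform, HilbertAt, smul_eq_mul,
    div_eq_inv_mul, mul_one]

lemma truncatedHilbertTransform_ofReal (ε : ℝ) (f : ℝ → ℝ) (x : ℝ) :
    truncatedHilbertTransform ε (fun y => (f y : ℂ)) x = truncatedHilbertTransform ε f x := by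
  simp only [truncatedHilbertTransform, Complex.real_smul, smul_eq_mul, ← Complex.ofReal_mul,
    integral_complex_ofReal]

lemma hasHilbertTransformAt_ofReal_iff {f : ℝ → ℝ} {x L : ℝ} :
    HasHilbertTransformAt (fun y => (f y : ℂ)) x L ↔ HilbertAt f x L := by
  rw [← hasHilbertTransformAt_iff_hilbertAt, HasHilbertTransformAt, HasHilbertTransformAt,
    Complex.isometry_ofReal.isEmbedding.tendsto_nhds_iff]
  simp only [Function.comp_def, truncatedHilbertTransform_ofReal]

lemma HasHilbertTransformAt.exists_ofReal_eq {f : ℝ → ℝ} {x : ℝ} {L : ℂ}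
    (h : HasHilbertTransformAt (fun y => (f y : ℂ)) x L) : ∃ l : ℝ, (l : ℂ) = L :=
  Complex.isometry_ofReal.isClosedEmbedding.isClosed_range.mem_of_tendsto h
    (Eventually.of_forall fun ε => ⟨_, (truncatedHilbertTransform_ofReal ε f x).symm⟩)

lemma integrableOn_inv_smul {f : ℝ → E} {s : Set ℝ} {ε : ℝ} (hf : IntegrableOn f s)
    (hs : MeasurableSet s) (hε : 0 < ε) (hsε : ∀ t ∈ s, ε ≤ |t|) :
    IntegrableOn (fun t => t⁻¹ • f t) s := by
  refine Integrable.bdd_smul hf ε⁻¹ (Measurable.aestronglyMeasurable (by fun_prop)) ?_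
  filter_upwards [ae_restrict_mem hs] with t ht
  rw [norm_inv, norm_eq_abs]
  exact inv_anti₀ hε (hsε t ht)

lemma measurableSet_lt_abs (ε : ℝ) : MeasurableSet {t : ℝ | ε < |t|} :=
  measurableSet_lt measurable_const (by fun_prop)

lemma setIntegral_lt_abs_sub (f : ℝ → E) (x ε : ℝ) :
    ∫ y in {y | ε < |x - y|}, f y = ∫ t in {t | ε < |t|}, f (x - t) := by
  rw [← integral_indicator (measurableSet_lt_abs ε),
    ← integral_indicator (measurableSet_lt measurable_const (by fun_prop)),
    ← integral_sub_left_eq_self _ volume x]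
  congr with t
  simp [indicator]

lemma setIntegral_lt_abs {f : ℝ → E} {ε : ℝ} (hε : 0 ≤ ε) (hf : IntegrableOn f {t | ε < |t|}) :
    ∫ t in {t | ε < |t|}, f t = ∫ t in Ioi ε, (f t + f (-t)) := by
  have hset : {t : ℝ | ε < |t|} = Ioi ε ∪ Iio (-ε) := by
    ext t
    simp [lt_abs, lt_neg]
  have hdisj : Disjoint (Ioi ε) (Iio (-ε)) :=
    Ioi_disjoint_Iio_of_le (by linarith)
  rw [hset] at hf ⊢
  obtain ⟨hpos, hneg⟩ := integrableOn_union.1 hf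
  have hneg' : IntegrableOn (fun t => f (-t)) (Ioi ε) := hneg.comp_neg_Ioi
  rw [setIntegral_union hdisj measurableSet_Iio hpos hneg, integral_add hpos hneg',
    integral_comp_neg_Ioi ε f, integral_Iic_eq_integral_Iio]

lemma integral_inv_smul_eq_integral_Ioi {f : ℝ → E} (hf : Integrable f) (x : ℝ) {ε : ℝ}
    (hε : 0 < ε) :
    ∫ y in {y | ε < |x - y|}, (x - y)⁻¹ • f y =
      ∫ t in Ioi ε, t⁻¹ • (f (x - t) - f (x + t)) := by
  have hint : IntegrableOn (fun t => t⁻¹ • f (x - t)) {t | ε < |t|} :=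
    integrableOn_inv_smul (hf.comp_sub_left x).integrableOn (measurableSet_lt_abs ε) hε
      fun _ ht => le_of_lt ht
  rw [setIntegral_lt_abs_sub (fun y => (x - y)⁻¹ • f y)]
  simp only [sub_sub_cancel]
  rw [setIntegral_lt_abs hε.le hint]
  simp [smul_sub, ← sub_eq_add_neg]

end PrincipalValue

lemma tendsto_integral_smul_of_norm_le {ι α 𝕜 E : Type*} {l : Filter ι} [l.IsCountablyGenerated]
    [MeasurableSpace α] {μ : Measure α} [NormedRing 𝕜] [NormedAddCommGroup E] [NormedSpace ℝ E]
    [Module 𝕜 E] [IsBoundedSMul 𝕜 E] {k : ι → α → 𝕜} {k₀ : α → 𝕜} {F : α → E} {C : ℝ}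
    (hF : Integrable F μ) (hk : ∀ i, AEStronglyMeasurable (k i) μ) (hC : ∀ i a, ‖k i a‖ ≤ C)
    (hlim : ∀ a, Tendsto (k · a) l (𝓝 (k₀ a))) :
    Tendsto (fun i => ∫ a, k i a • F a ∂μ) l (𝓝 (∫ a, k₀ a • F a ∂μ)) := by
  refine tendsto_integral_filter_of_dominated_convergence (fun a => C * ‖F a‖)
    (Eventually.of_forall fun i => (hk i).smul hF.aestronglyMeasurable)
    (Eventually.of_forall fun i => Eventually.of_forall fun a => ?_) (hF.norm.const_mul C)
    (Eventually.of_forall fun a => (hlim a).smul_const (F a))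
  exact (norm_smul_le _ _).trans (mul_le_mul_of_nonneg_right (hC i a) (norm_nonneg _))

lemma measurable_real_sign : Measurable Real.sign :=
  Measurable.ite measurableSet_Iio measurable_const
    (Measurable.ite measurableSet_Ioi measurable_const measurable_const)

lemma abs_real_sign_le_one (p : ℝ) : |Real.sign p| ≤ 1 := by
  rcases Real.sign_apply_eq p with h | h | h <;> simp [h]

section SineKernel

variable {α E : Type*} [MeasurableSpace α] {μ : Measure α} {φ : α → ℝ}
  [NormedAddCommGroup E] [NormedSpace ℝ E] {F : α → E}

lemma tendsto_integral_sign_sub_sineIntegral_smul (hφ : AEMeasurable φ μ) (hF : Integrable F μ) :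
    Tendsto (fun ε => ∫ a, (π / 2 * Real.sign (φ a) - sineIntegral (ε * φ a)) • F a ∂μ) (𝓝 0)
      (𝓝 (∫ a, (π / 2 * Real.sign (φ a)) • F a ∂μ)) := by
  refine tendsto_integral_smul_of_norm_le (C := π / 2 + (π / 2 + 1)) hF (fun ε => ?_)
    (fun ε a => ?_) (fun a => ?_)
  · exact ((measurable_real_sign.comp_aemeasurable hφ).const_mul _).aestronglyMeasurable.sub
      (continuous_sineIntegral.comp_aestronglyMeasurable (hφ.const_mul ε).aestronglyMeasurable)
  · refine (norm_sub_le _ _).trans (add_le_add ?_ (abs_sineIntegral_le _))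
    rw [norm_mul, norm_of_nonneg (by positivity)]
    exact mul_le_of_le_one_right (by positivity) (abs_real_sign_le_one _)
  · have hcont : Continuous fun ε => π / 2 * Real.sign (φ a) - sineIntegral (ε * φ a) :=
      continuous_const.sub (continuous_sineIntegral.comp (by fun_prop))
    simpa using hcont.tendsto 0

variable [SFinite μ]

lemma integrable_sin_div_smul (hφ : AEMeasurable φ μ) (hF : Integrable F μ)
    {ε : ℝ} (hε : 0 < ε) (R : ℝ) :
    Integrable (Function.uncurry fun (t : ℝ) (a : α) => (sin (t * φ a) / t) • F a)
      ((volume.restrict (Ioc ε R)).prod μ) := by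
  refine (hF.comp_snd (volume.restrict (Ioc ε R))).bdd_smul (𝕜 := ℝ) ε⁻¹
    (AEMeasurable.aestronglyMeasurable (by fun_prop)) ?_
  have hmem : ∀ᵐ z ∂(volume.restrict (Ioc ε R)).prod μ, z.1 ∈ Ioc ε R :=
    Measure.quasiMeasurePreserving_fst.ae (ae_restrict_mem measurableSet_Ioc)
  filter_upwards [hmem] with z hz
  rw [norm_div, norm_eq_abs, norm_eq_abs, abs_of_pos (hε.trans hz.1)]
  calc |sin (z.1 * φ z.2)| / z.1 ≤ 1 / ε := by gcongr; exacts [abs_sin_le_one _, hz.1.le]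
    _ = ε⁻¹ := one_div ε

lemma integral_integral_sin_div_smul [CompleteSpace E] (hφ : AEMeasurable φ μ)
    (hF : Integrable F μ) {ε R : ℝ} (hε : 0 < ε) (hR : ε ≤ R) :
    ∫ t in ε..R, ∫ a, (sin (t * φ a) / t) • F a ∂μ =
      ∫ a, (sineIntegral (R * φ a) - sineIntegral (ε * φ a)) • F a ∂μ := by
  rw [intervalIntegral.integral_of_le hR,
    integral_integral_swap (integrable_sin_div_smul hφ hF hε R)]
  simp_rw [integral_smul_const, ← intervalIntegral.integral_of_le hR,
    integral_sin_mul_div _ hε hR]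

lemma tendsto_integral_integral_sin_div_smul [CompleteSpace E] (hφ : AEMeasurable φ μ)
    (hF : Integrable F μ) {ε : ℝ} (hε : 0 < ε) :
    Tendsto (fun R => ∫ t in ε..R, ∫ a, (sin (t * φ a) / t) • F a ∂μ) atTop
      (𝓝 (∫ a, (π / 2 * Real.sign (φ a) - sineIntegral (ε * φ a)) • F a ∂μ)) := by
  have hSi : ∀ r : ℝ, AEStronglyMeasurable (fun a => sineIntegral (r * φ a)) μ := fun r =>
    continuous_sineIntegral.comp_aestronglyMeasurable (hφ.const_mul r).aestronglyMeasurable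
  refine Tendsto.congr' ?_ (tendsto_integral_smul_of_norm_le (C := π / 2 + 1 + (π / 2 + 1)) hF
    (fun R => (hSi R).sub (hSi ε))
    (fun R a => (norm_sub_le _ _).trans
      (add_le_add (abs_sineIntegral_le _) (abs_sineIntegral_le _)))
    fun a => (tendsto_sineIntegral_mul_const (φ a)).sub_const _)
  filter_upwards [eventually_ge_atTop ε] with R hR
  exact (integral_integral_sin_div_smul hφ hF hε hR).symm

end SineKernel

section OscIntegral

variable {α E : Type*} [MeasurableSpace α] {μ : Measure α} {φ : α → ℝ}
  [NormedAddCommGroup E] [NormedSpace ℂ E] {F : α → E}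

/-- The superposition of plane waves `x ↦ ∫ e^{i φ(a) x} F(a) dμ(a)` with frequencies `φ` and
amplitudes `F`. Letting `α` be arbitrary makes products of such functions again of this form. -/
noncomputable def oscIntegral (μ : Measure α) (φ : α → ℝ) (F : α → E) (x : ℝ) : E :=
  ∫ a, Complex.exp ((φ a * x : ℝ) * Complex.I) • F a ∂μ

lemma integrable_cexp_smul (hφ : AEMeasurable φ μ) (hF : Integrable F μ) (x : ℝ) :
    Integrable (fun a => Complex.exp ((φ a * x : ℝ) * Complex.I) • F a) μ :=
  hF.bdd_smul 1 (AEMeasurable.aestronglyMeasurable (by fun_prop))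
    (Eventually.of_forall fun a => (Complex.norm_exp_ofReal_mul_I _).le)

lemma norm_oscIntegral_le (μ : Measure α) (φ : α → ℝ) (F : α → E) (x : ℝ) :
    ‖oscIntegral μ φ F x‖ ≤ ∫ a, ‖F a‖ ∂μ := by
  refine (norm_integral_le_integral_norm _).trans_eq ?_
  simp only [norm_smul, Complex.norm_exp_ofReal_mul_I, one_mul]

lemma continuous_oscIntegral (hφ : AEMeasurable φ μ) (hF : Integrable F μ) :
    Continuous (oscIntegral μ φ F) := by
  refine continuous_of_dominated
    (fun x => (integrable_cexp_smul hφ hF x).aestronglyMeasurable)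
    (fun x => Eventually.of_forall fun a => ?_) hF.norm (Eventually.of_forall fun a => ?_)
  · rw [norm_smul, Complex.norm_exp_ofReal_mul_I, one_mul]
  · fun_prop

lemma oscIntegral_add {G : α → E} (hφ : AEMeasurable φ μ) (hF : Integrable F μ)
    (hG : Integrable G μ) (x : ℝ) :
    oscIntegral μ φ (fun a => F a + G a) x = oscIntegral μ φ F x + oscIntegral μ φ G x := by
  simp_rw [oscIntegral, smul_add]
  exact integral_add (integrable_cexp_smul hφ hF x) (integrable_cexp_smul hφ hG x)

lemma oscIntegral_sub {G : α → E} (hφ : AEMeasurable φ μ) (hF : Integrable F μ)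
    (hG : Integrable G μ) (x : ℝ) :
    oscIntegral μ φ (fun a => F a - G a) x = oscIntegral μ φ F x - oscIntegral μ φ G x := by
  simp_rw [oscIntegral, smul_sub]
  exact integral_sub (integrable_cexp_smul hφ hF x) (integrable_cexp_smul hφ hG x)

lemma oscIntegral_congr_ae {G : α → E} (h : F =ᵐ[μ] G) (φ : α → ℝ) :
    oscIntegral μ φ F = oscIntegral μ φ G := by
  ext x
  exact integral_congr_ae (h.mono fun a ha => by simp only [ha])

lemma oscIntegral_smul_oscIntegral {β : Type*} [MeasurableSpace β] (μ : Measure α) [SFinite μ]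
    (ν : Measure β) [SFinite ν] (φ : α → ℝ) (ψ : β → ℝ) (F : α → ℂ) (G : β → E) (x : ℝ) :
    oscIntegral μ φ F x • oscIntegral ν ψ G x =
      oscIntegral (μ.prod ν) (fun z => φ z.1 + ψ z.2) (fun z => F z.1 • G z.2) x := by
  simp_rw [oscIntegral, ← integral_prod_smul, add_mul, Complex.ofReal_add, add_mul,
    Complex.exp_add, smul_eq_mul, mul_smul]
  congr with z
  simp only [smul_comm (F z.1)]

lemma cexp_mul_sub_sub_cexp_mul_add (p x t : ℝ) :
    Complex.exp ((p * (x - t) : ℝ) * Complex.I) - Complex.exp ((p * (x + t) : ℝ) * Complex.I) =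
      sin (t * p) * (-2 * Complex.I * Complex.exp ((p * x : ℝ) * Complex.I)) := by
  have hsub : ((p * (x - t) : ℝ) : ℂ) * Complex.I =
      (p * x : ℝ) * Complex.I + -(t * p : ℂ) * Complex.I := by push_cast; ring
  have hadd : ((p * (x + t) : ℝ) : ℂ) * Complex.I =
      (p * x : ℝ) * Complex.I + (t * p : ℂ) * Complex.I := by push_cast; ring
  rw [hsub, hadd, Complex.exp_add, Complex.exp_add, Complex.ofReal_sin, Complex.sin]
  push_cast
  linear_combination (Complex.exp (p * x * Complex.I) * (Complex.exp (-(t * p : ℂ) * Complex.I)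
    - Complex.exp ((t * p : ℂ) * Complex.I))) * Complex.I_sq

lemma oscIntegral_sub_sub_oscIntegral_add (hφ : AEMeasurable φ μ) (hF : Integrable F μ)
    (x t : ℝ) :
    oscIntegral μ φ F (x - t) - oscIntegral μ φ F (x + t) =
      ∫ a, sin (t * φ a) •
        (-2 * Complex.I * Complex.exp ((φ a * x : ℝ) * Complex.I)) • F a ∂μ := by
  rw [oscIntegral, oscIntegral, ← integral_sub (integrable_cexp_smul hφ hF _)
    (integrable_cexp_smul hφ hF _)]
  congr with a
  rw [← sub_smul, cexp_mul_sub_sub_cexp_mul_add, mul_smul, Complex.coe_smul]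

end OscIntegral

section FourierMultiplier

variable {α E : Type*} [MeasurableSpace α] {μ : Measure α} {φ : α → ℝ}
  [NormedAddCommGroup E] [NormedSpace ℂ E] {F : α → E}

/-- The Fourier multiplier `-i sgn p` of the Hilbert transform. -/
noncomputable def hilbertMultiplier (p : ℝ) : ℂ := -Complex.I * Real.sign p

lemma measurable_hilbertMultiplier : Measurable hilbertMultiplier :=
  (Complex.measurable_ofReal.comp measurable_real_sign).const_mul _

lemma norm_hilbertMultiplier_le_one (p : ℝ) : ‖hilbertMultiplier p‖ ≤ 1 := by
  simpa [hilbertMultiplier] using abs_real_sign_le_one p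

-- The Tricomi identity on the Fourier side.
lemma hilbertMultiplier_add_mul_add {p q : ℝ} (hp : p ≠ 0) (hq : q ≠ 0) :
    hilbertMultiplier (p + q) * (hilbertMultiplier p + hilbertMultiplier q) =
      hilbertMultiplier p * hilbertMultiplier q - 1 := by
  have hsign : Real.sign (p + q) * (Real.sign p + Real.sign q) =
      1 + Real.sign p * Real.sign q := by
    rcases hp.lt_or_gt with hp | hp <;> rcases hq.lt_or_gt with hq | hq
    · norm_num [Real.sign_of_neg, hp, hq, add_neg hp hq]
    · simp [Real.sign_of_neg hp, Real.sign_of_pos hq]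
    · simp [Real.sign_of_pos hp, Real.sign_of_neg hq]
    · simp [Real.sign_of_pos, hp, hq, add_pos hp hq]
  have hsign' := congrArg Complex.ofReal hsign
  push_cast at hsign'
  simp only [hilbertMultiplier]
  linear_combination Complex.I ^ 2 * hsign' + Complex.I_sq

lemma integrable_hilbertMultiplier_smul (hφ : AEMeasurable φ μ) (hF : Integrable F μ) :
    Integrable (fun a => hilbertMultiplier (φ a) • F a) μ :=
  hF.bdd_smul 1 (measurable_hilbertMultiplier.comp_aemeasurable hφ).aestronglyMeasurable
    (Eventually.of_forall fun _ => norm_hilbertMultiplier_le_one _)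

lemma integrable_neg_two_mul_cexp_smul (hφ : AEMeasurable φ μ) (hF : Integrable F μ) (x : ℝ) :
    Integrable (fun a => (-2 * Complex.I * Complex.exp ((φ a * x : ℝ) * Complex.I)) • F a) μ := by
  simp_rw [mul_smul (-2 * Complex.I)]
  exact (integrable_cexp_smul hφ hF x).smul (-2 * Complex.I)

lemma setIntegral_inv_smul_oscIntegral [CompleteSpace E] [SFinite μ] (hφ : AEMeasurable φ μ)
    (hF : Integrable F μ) (hosc : Integrable (oscIntegral μ φ F)) (x : ℝ) {ε : ℝ} (hε : 0 < ε) :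
    ∫ y in {y | ε < |x - y|}, (x - y)⁻¹ • oscIntegral μ φ F y =
      ∫ a, (π / 2 * Real.sign (φ a) - sineIntegral (ε * φ a)) •
        (-2 * Complex.I * Complex.exp ((φ a * x : ℝ) * Complex.I)) • F a ∂μ := by
  have hint : IntegrableOn
      (fun t => t⁻¹ • (oscIntegral μ φ F (x - t) - oscIntegral μ φ F (x + t))) (Ioi ε) :=
    integrableOn_inv_smul ((hosc.comp_sub_left x).sub (hosc.comp_add_left x)).integrableOn
      measurableSet_Ioi hε fun t ht => ht.le.trans (le_abs_self t)
  rw [integral_inv_smul_eq_integral_Ioi hosc x hε]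
  refine tendsto_nhds_unique (intervalIntegral_tendsto_integral_Ioi ε hint tendsto_id)
    ((tendsto_integral_integral_sin_div_smul hφ (integrable_neg_two_mul_cexp_smul hφ hF x)
      hε).congr fun R => ?_)
  simp_rw [oscIntegral_sub_sub_oscIntegral_add hφ hF, ← integral_smul, smul_smul,
    div_eq_inv_mul, id]

theorem hasHilbertTransformAt_oscIntegral [CompleteSpace E] [SFinite μ] (hφ : AEMeasurable φ μ)
    (hF : Integrable F μ) (hosc : Integrable (oscIntegral μ φ F)) (x : ℝ) :
    HasHilbertTransformAt (oscIntegral μ φ F) x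
      (oscIntegral μ φ (fun a => hilbertMultiplier (φ a) • F a) x) := by
  have hlim : π⁻¹ • ∫ a, (π / 2 * Real.sign (φ a)) •
        (-2 * Complex.I * Complex.exp ((φ a * x : ℝ) * Complex.I)) • F a ∂μ =
      oscIntegral μ φ (fun a => hilbertMultiplier (φ a) • F a) x := by
    rw [oscIntegral, ← integral_smul]
    congr with a
    rw [← Complex.coe_smul, ← Complex.coe_smul, smul_smul, smul_smul, smul_smul,
      hilbertMultiplier]
    congr 1
    have hπ : (π : ℂ) ≠ 0 := Complex.ofReal_ne_zero.2 pi_ne_zero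
    push_cast
    field_simp
  rw [← hlim]
  refine (((tendsto_integral_sign_sub_sineIntegral_smul hφ
    (integrable_neg_two_mul_cexp_smul hφ hF x)).mono_left nhdsWithin_le_nhds).const_smul
      π⁻¹).congr' ?_
  filter_upwards [self_mem_nhdsWithin] with ε hε
  rw [truncatedHilbertTransform, setIntegral_inv_smul_oscIntegral hφ hF hosc x hε]

end FourierMultiplier

section Tricomi

variable {α β : Type*} [MeasurableSpace α] [MeasurableSpace β] {μ : Measure α} {ν : Measure β}
  {φ : α → ℝ} {ψ : β → ℝ} {F : α → ℂ} {G : β → ℂ}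

lemma integrable_oscIntegral_mul {f : ℝ → ℂ} (hf : Integrable f) (hφ : AEMeasurable φ μ)
    (hF : Integrable F μ) : Integrable (fun y => oscIntegral μ φ F y * f y) :=
  hf.bdd_mul (c := ∫ a, ‖F a‖ ∂μ) (continuous_oscIntegral hφ hF).aestronglyMeasurable
    (Eventually.of_forall fun y => norm_oscIntegral_le μ φ F y)

lemma ae_prod_hilbertMultiplier_add_mul_add [SFinite μ] [SFinite ν] (hφ₀ : ∀ᵐ a ∂μ, φ a ≠ 0)
    (hψ₀ : ∀ᵐ b ∂ν, ψ b ≠ 0) :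
    ∀ᵐ z ∂μ.prod ν,
      hilbertMultiplier (φ z.1 + ψ z.2) * (hilbertMultiplier (φ z.1) + hilbertMultiplier (ψ z.2)) =
        hilbertMultiplier (φ z.1) * hilbertMultiplier (ψ z.2) - 1 := by
  filter_upwards [Measure.quasiMeasurePreserving_fst.ae hφ₀,
    Measure.quasiMeasurePreserving_snd.ae hψ₀] with z hp hq
  exact hilbertMultiplier_add_mul_add hp hq

theorem hasHilbertTransformAt_oscIntegral_mul_add [SFinite μ] [SFinite ν]
    (hφ : AEMeasurable φ μ) (hψ : AEMeasurable ψ ν)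
    (hφ₀ : ∀ᵐ a ∂μ, φ a ≠ 0) (hψ₀ : ∀ᵐ b ∂ν, ψ b ≠ 0)
    (hF : Integrable F μ) (hG : Integrable G ν)
    (hf : Integrable (oscIntegral μ φ F)) (hg : Integrable (oscIntegral ν ψ G)) (x : ℝ) :
    HasHilbertTransformAt
      (fun y => oscIntegral μ φ F y * oscIntegral ν ψ (fun b => hilbertMultiplier (ψ b) • G b) y +
        oscIntegral μ φ (fun a => hilbertMultiplier (φ a) • F a) y * oscIntegral ν ψ G y) x
      (oscIntegral μ φ (fun a => hilbertMultiplier (φ a) • F a) x *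
          oscIntegral ν ψ (fun b => hilbertMultiplier (ψ b) • G b) x -
        oscIntegral μ φ F x * oscIntegral ν ψ G x) := by
  set F' := fun a => hilbertMultiplier (φ a) • F a with hF'_def
  set G' := fun b => hilbertMultiplier (ψ b) • G b with hG'_def
  have hF' : Integrable F' μ := integrable_hilbertMultiplier_smul hφ hF
  have hG' : Integrable G' ν := integrable_hilbertMultiplier_smul hψ hG
  have hphase : AEMeasurable (fun z : α × β => φ z.1 + ψ z.2) (μ.prod ν) :=
    (hφ.comp_quasiMeasurePreserving Measure.quasiMeasurePreserving_fst).add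
      (hψ.comp_quasiMeasurePreserving Measure.quasiMeasurePreserving_snd)
  have hsource : (fun y => oscIntegral μ φ F y * oscIntegral ν ψ G' y +
      oscIntegral μ φ F' y * oscIntegral ν ψ G y) =
      oscIntegral (μ.prod ν) (fun z => φ z.1 + ψ z.2)
        fun z => F z.1 • G' z.2 + F' z.1 • G z.2 := by
    ext y
    rw [oscIntegral_add hphase (hF.smul_prod hG') (hF'.smul_prod hG),
      ← oscIntegral_smul_oscIntegral, ← oscIntegral_smul_oscIntegral, smul_eq_mul, smul_eq_mul]
  have hamplitude : (fun z : α × β => hilbertMultiplier (φ z.1 + ψ z.2) •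
      (F z.1 • G' z.2 + F' z.1 • G z.2)) =ᵐ[μ.prod ν]
      fun z => F' z.1 • G' z.2 - F z.1 • G z.2 := by
    filter_upwards [ae_prod_hilbertMultiplier_add_mul_add hφ₀ hψ₀] with z hz
    simp only [hF'_def, hG'_def, smul_eq_mul]
    linear_combination (F z.1 * G z.2) * hz
  have hintegrable : Integrable (fun y => oscIntegral μ φ F y * oscIntegral ν ψ G' y +
      oscIntegral μ φ F' y * oscIntegral ν ψ G y) := by
    refine .add ?_ (integrable_oscIntegral_mul hg hφ hF')
    simpa only [mul_comm] using integrable_oscIntegral_mul hf hψ hG'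
  rw [hsource] at hintegrable ⊢
  have hprod : Integrable (fun z => F z.1 • G' z.2 + F' z.1 • G z.2) (μ.prod ν) :=
    (hF.smul_prod hG').add (hF'.smul_prod hG)
  have hH := hasHilbertTransformAt_oscIntegral hphase hprod hintegrable x
  rw [oscIntegral_congr_ae hamplitude, oscIntegral_sub hphase (hF'.smul_prod hG')
    (hF.smul_prod hG), ← oscIntegral_smul_oscIntegral, ← oscIntegral_smul_oscIntegral] at hH
  exact hH

theorem hasHilbertTransformAt_oscIntegral_mul_self [SFinite μ] (hφ : AEMeasurable φ μ)
    (hφ₀ : ∀ᵐ a ∂μ, φ a ≠ 0) (hF : Integrable F μ) (hf : Integrable (oscIntegral μ φ F)) (x : ℝ) :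
    HasHilbertTransformAt
      (fun y => oscIntegral μ φ F y * oscIntegral μ φ (fun a => hilbertMultiplier (φ a) • F a) y) x
      (1 / 2 * (oscIntegral μ φ (fun a => hilbertMultiplier (φ a) • F a) x ^ 2 -
        oscIntegral μ φ F x ^ 2)) := by
  convert (hasHilbertTransformAt_oscIntegral_mul_add hφ hφ hφ₀ hφ₀ hF hF hf hf x).const_smul
    (1 / 2 : ℂ) using 1
  · ext y
    rw [smul_eq_mul]
    ring
  · rw [smul_eq_mul]
    ring

end Tricomi

lemma oscIntegral_fourier {E : Type*} [NormedAddCommGroup E] [NormedSpace ℂ E] [CompleteSpace E]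
    {f : ℝ → E} (hc : Continuous f) (hf : Integrable f) (hF : Integrable (𝓕 f)) :
    oscIntegral volume (fun ξ => 2 * π * ξ) (𝓕 f) = f := by
  ext x
  conv_rhs => rw [← hc.fourierInv_fourier_eq hf hF, Real.fourierInv_eq']
  simp only [oscIntegral, RCLike.inner_apply, conj_trivial, mul_assoc, mul_comm x]

theorem tricomi_identity_general (ω : ℝ → ℝ) (hc : Continuous ω) (hω : Integrable ω)
    (hF : Integrable (𝓕 fun y => (ω y : ℂ))) :
    ∃ Hω : ℝ → ℝ,
      (∀ x : ℝ, HilbertAt ω x (Hω x)) ∧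
      (∀ x : ℝ, HilbertAt (fun y => ω y * Hω y) x ((1 / 2) * ((Hω x) ^ 2 - (ω x) ^ 2))) := by
  have hinv : oscIntegral volume (fun ξ => 2 * π * ξ) (𝓕 fun y => (ω y : ℂ)) = fun y => (ω y : ℂ) :=
    oscIntegral_fourier (Complex.continuous_ofReal.comp hc) hω.ofReal hF
  have hosc : Integrable (oscIntegral volume (fun ξ => 2 * π * ξ) (𝓕 fun y => (ω y : ℂ))) := by
    rw [hinv]
    exact hω.ofReal
  have hphase : AEMeasurable (fun ξ : ℝ => 2 * π * ξ) := by fun_prop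
  have hphase₀ : ∀ᵐ ξ : ℝ, 2 * π * ξ ≠ 0 := by
    filter_upwards [Measure.ae_ne volume 0] with ξ hξ using mul_ne_zero two_pi_pos.ne' hξ
  have hHω := hasHilbertTransformAt_oscIntegral hphase hF hosc
  have hωHω := hasHilbertTransformAt_oscIntegral_mul_self hphase hphase₀ hF hosc
  rw [hinv] at hHω hωHω
  choose Hω hHω_eq using fun x => (hHω x).exists_ofReal_eq
  simp only [← hHω_eq] at hHω hωHω
  refine ⟨Hω, fun x => hasHilbertTransformAt_ofReal_iff.1 (hHω x), fun x => ?_⟩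
  rw [← hasHilbertTransformAt_ofReal_iff]
  push_cast
  exact hωHω x

lemma integrable_fourier_ofReal (ω : SchwartzMap ℝ ℝ) : Integrable (𝓕 fun y => (ω y : ℂ)) := by
  have h := (𝓕 (SchwartzMap.postcompCLM Complex.ofRealCLM ω) : SchwartzMap ℝ ℂ).integrable
    (μ := volume)
  rwa [SchwartzMap.fourier_coe] at h

/-- Tricomi identity: for a Schwartz function `ω`, the principal value Hilbert
transform `Hω` exists everywhere, the PV Hilbert transform of `ω · Hω` exists
everywhere, and `H(ω Hω) = ((Hω)² - ω²)/2`. -/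
theorem tricomi_identity (ω : SchwartzMap ℝ ℝ) :
    ∃ Hω : ℝ → ℝ,
      (∀ x : ℝ, HilbertAt (fun y => ω y) x (Hω x)) ∧
      (∀ x : ℝ, HilbertAt (fun y => ω y * Hω y) x
        ((1/2) * ((Hω x)^2 - (ω x)^2))) :=
  tricomi_identity_general ω ω.continuous ω.integrable (integrable_fourier_ofReal ω)
end

section
/- Let ω: ℝ → ℝ be an odd Schwartz function and set u_x = Hω (the Hilbert transform of ω), which is an even smooth function. Then the function x ↦ (u_x(x) − u_x(0))·ω(x)/x³ extends continuously to x = 0, is Lebesgue integrable on ℝ, and ∫_ℝ (u_x(x) − u_x(0))·ω(x)/x³ dx = (π/2)·ω'(0)². In particular this integral is nonnegative, and it vanishes if ω'(0) = 0. -/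
open MeasureTheory Filter Real Set

/-!
Write `ω(x) = x q(x)` with `q` even. Since `y / (x - y) = x / (x - y) - 1`, the Hilbert transforms
satisfy `u_x(x) - u_x(0) = x Hq(x)`, and the integrand becomes `q(x) Hq(x) / x`. If `C` is the
cosine transform of `q`, then `Hq(x) / x = (1/π) ∫₀^∞ s sinc(xs) C(s) ds`, where
`s sinc(xs) = ∫₀^s cos(xr) dr`. By Fubini the integral equals
`(1/π) ∫₀^∞ C(s) ∫₀^s C(r) dr ds = (1/2π) (∫₀^∞ C)²`, and `∫₀^∞ C = π q(0) = π ω'(0)` by Fourier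
inversion.
-/

open scoped Topology FourierTransform SchwartzMap

section PrincipalValue

lemma aecover_lt_of_ae_pos {α : Type*} [MeasurableSpace α] {μ : Measure α} {g : α → ℝ}
    (hg : Measurable g) (hpos : ∀ᵐ a ∂μ, 0 < g a) :
    AECover μ (𝓝[>] (0 : ℝ)) fun ε => {a | ε < g a} where
  ae_eventually_mem := hpos.mono fun _ ha => nhdsWithin_le_nhds (eventually_lt_nhds ha)
  measurableSet _ := measurableSet_lt measurable_const hg

lemma integrable_div_id {f : ℝ → ℝ} (hf : Integrable f) (hd : DifferentiableAt ℝ f 0)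
    (h0 : f 0 = 0) : Integrable fun t => f t / t := by
  obtain ⟨C, hC⟩ := hd.hasDerivAt.isBigO_sub.bound
  obtain ⟨δ, hδ, hball⟩ := Metric.eventually_nhds_iff_ball.1 hC
  have hbound : Integrable fun t => (Metric.ball (0 : ℝ) δ).indicator (fun _ => |C|) t
      + δ⁻¹ * ‖f t‖ :=
    ((integrable_indicator_iff measurableSet_ball).2
      (integrableOn_const measure_ball_lt_top.ne)).add (hf.norm.const_mul _)
  refine hbound.mono' (hf.1.div₀ measurable_id.aestronglyMeasurable) (ae_of_all _ fun t => ?_)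
  rw [norm_div, div_eq_inv_mul]
  by_cases ht : t ∈ Metric.ball (0 : ℝ) δ
  · have hft : ‖f t‖ ≤ C * ‖t‖ := by simpa [h0] using hball t ht
    have : ‖t‖⁻¹ * ‖f t‖ ≤ |C| := by
      rw [inv_mul_eq_div]
      exact div_le_of_le_mul₀ (norm_nonneg t) (abs_nonneg C)
        (hft.trans (by gcongr; exact le_abs_self C))
    rw [indicator_of_mem ht]
    have := mul_nonneg (inv_nonneg.2 hδ.le) (norm_nonneg (f t))
    linarith
  · have : δ ≤ ‖t‖ := by simpa using ht
    rw [indicator_of_notMem ht, zero_add]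
    gcongr

lemma integrableOn_div_sub {f : ℝ → ℝ} (hf : Integrable f) (x : ℝ) {ε : ℝ} (hε : 0 < ε) :
    IntegrableOn (fun y => f y / (x - y)) {y | ε < |x - y|} := by
  simp only [div_eq_inv_mul]
  refine hf.integrableOn.bdd_mul (c := ε⁻¹) (by fun_prop) ?_
  refine (ae_restrict_iff' (measurableSet_lt (by fun_prop) (by fun_prop))).2 (ae_of_all _ ?_)
  intro y (hy : ε < |x - y|)
  rw [norm_inv, Real.norm_eq_abs]
  gcongr

lemma setIntegral_div_sub_eq {f : ℝ → ℝ} (hf : Integrable f) (x : ℝ) {ε : ℝ} (hε : 0 < ε) :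
    ∫ y in {y | ε < |x - y|}, f y / (x - y) =
      1 / 2 * ∫ t in {t | ε < |t|}, (f (x - t) - f (x + t)) / t := by
  have hmeas : ∀ c : ℝ, MeasurableSet {y : ℝ | ε < |c - y|} := fun c =>
    measurableSet_lt measurable_const (by fun_prop)
  have hmeas₀ : MeasurableSet {t : ℝ | ε < |t|} := by simpa using hmeas 0
  have hleft : ∫ y in {y | ε < |x - y|}, f y / (x - y) = ∫ t in {t | ε < |t|}, f (x - t) / t := by
    rw [← integral_indicator (hmeas x), ← integral_indicator hmeas₀,
      ← integral_sub_left_eq_self _ volume x]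
    simp [indicator]
  have hright : ∫ t in {t | ε < |t|}, f (x + t) / t = -∫ t in {t | ε < |t|}, f (x - t) / t := by
    rw [← integral_indicator hmeas₀, ← integral_indicator hmeas₀,
      ← integral_neg_eq_self _ volume, ← integral_neg]
    congr 1 with t
    simp only [indicator, mem_ofPred_eq, abs_neg, ← sub_eq_add_neg]
    split_ifs <;> simp [div_neg]
  have hint : ∀ {g : ℝ → ℝ}, Integrable g → IntegrableOn (fun t => g t / t) {t | ε < |t|} :=
    fun hg => by simpa [div_neg, IntegrableOn] using (integrableOn_div_sub hg 0 hε).neg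
  simp only [sub_div]
  rw [integral_sub (hint (hf.comp_sub_left x)) (hint (hf.comp_add_left x)), hright, hleft]
  ring

lemma HilbertAt.unique {f : ℝ → ℝ} {x L M : ℝ} (hL : HilbertAt f x L) (hM : HilbertAt f x M) :
    L = M :=
  tendsto_nhds_unique hL hM

lemma integrable_sub_comp_add_div {f : ℝ → ℝ} {x : ℝ} (hf : Integrable f)
    (hd : DifferentiableAt ℝ f x) : Integrable fun t => (f (x - t) - f (x + t)) / t := by
  refine integrable_div_id ((hf.comp_sub_left x).sub (hf.comp_add_left x)) ?_ (by simp)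
  exact (DifferentiableAt.comp 0 (by simpa using hd) (by fun_prop)).sub
    (DifferentiableAt.comp 0 (by simpa using hd) (by fun_prop))

lemma hilbertAt_of_differentiableAt {f : ℝ → ℝ} {x : ℝ} (hf : Integrable f)
    (hd : DifferentiableAt ℝ f x) :
    HilbertAt f x (1 / π * (1 / 2 * ∫ t, (f (x - t) - f (x + t)) / t)) := by
  have hcover : AECover volume (𝓝[>] (0 : ℝ)) fun ε => {t : ℝ | ε < |t|} :=
    aecover_lt_of_ae_pos measurable_abs ((Measure.ae_ne volume 0).mono fun _ => abs_pos.2)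
  refine (((hcover.integral_tendsto_of_countably_generated
    (integrable_sub_comp_add_div hf hd)).const_mul (1 / 2)).const_mul (1 / π)).congr' ?_
  filter_upwards [self_mem_nhdsWithin] with ε hε
  rw [setIntegral_div_sub_eq hf x hε]

lemma HilbertAt.id_mul {f : ℝ → ℝ} {x L : ℝ} (hf : Integrable f) (h : HilbertAt f x L) :
    HilbertAt (fun y => y * f y) x (x * L - 1 / π * ∫ y, f y) := by
  have hcover : AECover volume (𝓝[>] (0 : ℝ)) fun ε => {y : ℝ | ε < |x - y|} :=
    aecover_lt_of_ae_pos (by fun_prop)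
      ((Measure.ae_ne volume x).mono fun _ hy => abs_pos.2 (sub_ne_zero.2 hy.symm))
  refine ((h.const_mul x).sub ((hcover.integral_tendsto_of_countably_generated hf).const_mul
    (1 / π))).congr' ?_
  filter_upwards [self_mem_nhdsWithin] with ε (hε : 0 < ε)
  have hsplit : ∫ y in {y | ε < |x - y|}, y * f y / (x - y) =
      ∫ y in {y | ε < |x - y|}, (x * (f y / (x - y)) - f y) := by
    refine setIntegral_congr_fun (hcover.measurableSet ε) fun y (hy : ε < |x - y|) => ?_
    have : x - y ≠ 0 := abs_pos.1 (hε.trans hy)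
    field_simp
    ring
  rw [hsplit, integral_sub ((integrableOn_div_sub hf x hε).const_mul x) hf.integrableOn,
    integral_const_mul]
  ring

end PrincipalValue

section CosineTransform

/-- The cosine transform `s ↦ ∫ cos (t s) f(t) dt`, taken over the whole line; for even `f` it is
the Fourier transform of `f` in the angular frequency `s = 2πξ`. -/
noncomputable def cosTransform (f : ℝ → ℝ) (s : ℝ) : ℝ := ∫ t, cos (t * s) * f t

variable {f : ℝ → ℝ}

lemma integrable_cos_mul (hf : Integrable f) (s : ℝ) : Integrable fun t => cos (t * s) * f t :=
  hf.bdd_mul (by fun_prop) (ae_of_all _ fun _ => abs_cos_le_one _)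

lemma integrable_sin_mul (hf : Integrable f) (s : ℝ) : Integrable fun t => sin (t * s) * f t :=
  hf.bdd_mul (by fun_prop) (ae_of_all _ fun _ => abs_sin_le_one _)

lemma integral_sin_mul_eq_zero_of_even (heven : f.Even) (s : ℝ) :
    ∫ t, sin (t * s) * f t = 0 := by
  have h := integral_neg_eq_self (fun t => sin (t * s) * f t) volume
  simp only [heven _, neg_mul, sin_neg, integral_neg] at h
  linarith

lemma integral_sin_sub_mul_of_even (hf : Integrable f) (heven : f.Even) (x s : ℝ) :
    ∫ t, sin ((x - t) * s) * f t = sin (x * s) * cosTransform f s := by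
  have hexpand : ∀ t, sin ((x - t) * s) * f t =
      sin (x * s) * (cos (t * s) * f t) - cos (x * s) * (sin (t * s) * f t) := fun t => by
    rw [sub_mul, sin_sub]
    ring
  simp_rw [hexpand]
  rw [integral_sub ((integrable_cos_mul hf s).const_mul _) ((integrable_sin_mul hf s).const_mul _),
    integral_const_mul, integral_const_mul, integral_sin_mul_eq_zero_of_even heven, cosTransform]
  ring

lemma cosTransform_neg (f : ℝ → ℝ) (s : ℝ) : cosTransform f (-s) = cosTransform f s := by
  simp [cosTransform]

lemma cosTransform_eq_re_fourier (hf : Integrable f) (s : ℝ) :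
    cosTransform f s = (𝓕 (fun t => (f t : ℂ)) (s / (2 * π))).re := by
  have hint : Integrable fun t : ℝ =>
      Complex.exp ((-2 * π * t * (s / (2 * π)) : ℝ) * Complex.I) • (f t : ℂ) :=
    hf.ofReal.bdd_mul (c := 1) (by fun_prop)
      (ae_of_all _ fun _ => (Complex.norm_exp_ofReal_mul_I _).le)
  rw [fourier_real_eq_integral_exp_smul, ← RCLike.re_eq_complex_re, ← integral_re hint,
    cosTransform]
  congr 1 with t
  have harg : -2 * π * t * (s / (2 * π)) = -(t * s) := by field_simp
  rw [harg]
  simp [Complex.exp_re]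

lemma fourier_ofReal_of_even (hf : Integrable f) (heven : f.Even) :
    𝓕 (fun t => (f t : ℂ)) = fun ξ => (cosTransform f (2 * π * ξ) : ℂ) := by
  ext ξ
  have hexp : ∀ t : ℝ, Complex.exp ((-2 * π * t * ξ : ℝ) * Complex.I) • (f t : ℂ) =
      ((cos (t * (2 * π * ξ)) * f t : ℝ) : ℂ)
        - Complex.I * ((sin (t * (2 * π * ξ)) * f t : ℝ) : ℂ) := fun t => by
    have harg : -2 * π * t * ξ = -(t * (2 * π * ξ)) := by ring
    rw [harg, Complex.exp_mul_I, ← Complex.ofReal_cos, ← Complex.ofReal_sin, cos_neg, sin_neg,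
      smul_eq_mul]
    push_cast
    ring
  rw [fourier_real_eq_integral_exp_smul]
  simp_rw [hexp]
  rw [integral_sub (integrable_cos_mul hf _).ofReal ((integrable_sin_mul hf _).ofReal.const_mul _),
    integral_const_mul, integral_complex_ofReal, integral_complex_ofReal,
    integral_sin_mul_eq_zero_of_even heven]
  simp [cosTransform]

lemma continuous_cosTransform (hf : Integrable f) : Continuous (cosTransform f) :=
  continuous_of_dominated (fun s => (integrable_cos_mul hf s).1)
    (fun _ => ae_of_all _ fun _ =>
      (norm_mul_le _ _).trans (mul_le_of_le_one_left (norm_nonneg _) (abs_cos_le_one _)))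
    hf.norm (ae_of_all _ fun _ => by fun_prop)

lemma integrable_cosTransform_of_integrableOn_mul (hf : Integrable f)
    (hC : IntegrableOn (fun s => s * cosTransform f s) (Ioi 0)) :
    Integrable (cosTransform f) := by
  have hcont := continuous_cosTransform hf
  have hIoi₁ : IntegrableOn (cosTransform f) (Ioi 1) := by
    refine Integrable.mono (hC.mono_set (Ioi_subset_Ioi zero_le_one)) hcont.aestronglyMeasurable
      ((ae_restrict_iff' measurableSet_Ioi).2 (ae_of_all _ fun s (hs : 1 < s) => ?_))
    rw [norm_mul]
    exact le_mul_of_one_le_left (norm_nonneg _) (hs.le.trans (le_abs_self s))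
  have hIoi : IntegrableOn (cosTransform f) (Ioi 0) := by
    rw [← Ioc_union_Ioi_eq_Ioi zero_le_one]
    exact hcont.integrableOn_Ioc.union hIoi₁
  have hIio : IntegrableOn (cosTransform f) (Iio 0) := by
    refine (IntegrableOn.comp_neg_Iio ?_).congr_fun (fun s _ => cosTransform_neg f s)
      measurableSet_Iio
    rwa [neg_zero]
  have hIic : IntegrableOn (cosTransform f) (Iic 0) := by
    rwa [integrableOn_Iic_iff_integrableOn_Iio]
  rw [← integrableOn_univ, ← Iic_union_Ioi (a := 0)]
  exact hIic.union hIoi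

lemma tendsto_cosTransform_atTop (hf : Integrable f) : Tendsto (cosTransform f) atTop (𝓝 0) := by
  have hdiv : Tendsto (fun s : ℝ => s / (2 * π)) atTop (cocompact ℝ) :=
    (tendsto_id.atTop_div_const (by positivity)).mono_right atTop_le_cocompact
  have hre := (Complex.continuous_re.tendsto 0).comp
    ((zero_at_infty_fourier fun t => (f t : ℂ)).comp hdiv)
  exact hre.congr fun s => (cosTransform_eq_re_fourier hf s).symm

lemma hasDerivAt_cosTransform (hf : Integrable f) (hf' : Integrable fun t => t * f t) (s : ℝ) :
    HasDerivAt (cosTransform f) (-∫ t, sin (t * s) * (t * f t)) s := by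
  rw [← integral_neg]
  refine (hasDerivAt_integral_of_dominated_loc_of_deriv_le (s := univ)
    (F := fun r t => cos (t * r) * f t) (F' := fun r t => -(sin (t * r) * (t * f t)))
    (bound := fun t => ‖t * f t‖) univ_mem
    (Eventually.of_forall fun r => (integrable_cos_mul hf r).1) (integrable_cos_mul hf s)
    (integrable_sin_mul hf' s).neg.1 (ae_of_all _ fun t r _ => ?_) hf'.norm
    (ae_of_all _ fun t r _ => ?_)).2
  · rw [norm_neg, norm_mul]
    exact mul_le_of_le_one_left (norm_nonneg _) (abs_sin_le_one _)
  · refine (((hasDerivAt_id r).const_mul t).cos.mul_const (f t)).congr_deriv ?_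
    simp only [id]
    ring

-- The cosine transform of `f t / t` is a primitive, and vanishes at infinity by Riemann–Lebesgue.
lemma integral_Ioi_integral_sin_mul (hf : Integrable f) (hdiv : Integrable fun t => f t / t)
    (hint : IntegrableOn (fun s => ∫ t, sin (t * s) * f t) (Ioi 0)) :
    ∫ s in Ioi 0, ∫ t, sin (t * s) * f t = ∫ t, f t / t := by
  have hcancel : ∀ᵐ t : ℝ, t * (f t / t) = f t :=
    (Measure.ae_ne volume 0).mono fun t ht => mul_div_cancel₀ (f t) ht
  have hderiv : ∀ s : ℝ, HasDerivAt (cosTransform fun t => f t / t)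
      (-∫ t, sin (t * s) * f t) s := fun s => by
    have h := hasDerivAt_cosTransform hdiv (hf.congr (hcancel.mono fun _ => Eq.symm)) s
    rwa [integral_congr_ae (hcancel.mono fun t ht => by rw [ht])] at h
  have hftc := integral_Ioi_of_hasDerivAt_of_tendsto' (a := (0 : ℝ)) (fun s _ => hderiv s) hint.neg
    (tendsto_cosTransform_atTop hdiv)
  simpa [integral_neg, cosTransform] using hftc

lemma integral_Ioi_cosTransform (hf : Integrable f) (heven : f.Even) (hcont : ContinuousAt f 0)
    (hC : Integrable (cosTransform f)) : ∫ s in Ioi 0, cosTransform f s = π * f 0 := by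
  have hinv : ∫ ξ, cosTransform f (2 * π * ξ) = f 0 := by
    have hF : Integrable (𝓕 fun t => (f t : ℂ)) := by
      rw [fourier_ofReal_of_even hf heven]
      exact (hC.comp_mul_left' two_pi_pos.ne').ofReal
    have h := Integrable.fourierInv_fourier_eq hf.ofReal hF
      (Complex.continuous_ofReal.continuousAt.comp hcont)
    rw [fourier_ofReal_of_even hf heven, fourierInv_eq] at h
    simp only [inner_zero_right, AddChar.map_zero_eq_one, one_smul] at h
    rw [integral_complex_ofReal] at h
    exact_mod_cast h
  have habs : ∀ s, cosTransform f |s| = cosTransform f s := fun s => by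
    rcases abs_choice s with h | h <;> simp only [h, cosTransform_neg]
  have hhalf : ∫ s, cosTransform f s = 2 * ∫ s in Ioi 0, cosTransform f s := by
    rw [← integral_comp_abs]
    simp only [habs]
  rw [Measure.integral_comp_mul_left, abs_of_pos (by positivity), hhalf, smul_eq_mul] at hinv
  rw [← hinv]
  field_simp

lemma integral_sin_mul_sub_comp_add (hf : Integrable f) (x s : ℝ) :
    ∫ t, sin (t * s) * (f (x - t) - f (x + t)) = 2 * ∫ t, sin ((x - t) * s) * f t := by
  have hleft : ∫ t, sin (t * s) * f (x - t) = ∫ t, sin ((x - t) * s) * f t := by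
    rw [← integral_sub_left_eq_self _ volume x]
    simp
  have hright : ∫ t, sin (t * s) * f (x + t) = -∫ t, sin (t * s) * f (x - t) := by
    rw [← integral_neg_eq_self _ volume, ← integral_neg]
    simp [sub_eq_add_neg]
  simp only [mul_sub]
  rw [integral_sub (integrable_sin_mul (hf.comp_sub_left x) s)
    (integrable_sin_mul (hf.comp_add_left x) s), hright, hleft]
  ring

lemma hilbertAt_integral_integral_sin {x : ℝ} (hf : Integrable f) (hd : DifferentiableAt ℝ f x)
    (hint : IntegrableOn (fun s => ∫ t, sin ((x - t) * s) * f t) (Ioi 0)) :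
    HilbertAt f x (1 / π * ∫ s in Ioi 0, ∫ t, sin ((x - t) * s) * f t) := by
  have h := integral_Ioi_integral_sin_mul ((hf.comp_sub_left x).sub (hf.comp_add_left x))
    (integrable_sub_comp_add_div hf hd)
  simp only [Pi.sub_apply, integral_sin_mul_sub_comp_add hf, integral_const_mul] at h
  convert hilbertAt_of_differentiableAt hf hd using 2
  rw [← h (hint.const_mul 2)]
  ring

lemma hilbertAt_of_even {x : ℝ} (hf : Integrable f) (heven : f.Even)
    (hd : DifferentiableAt ℝ f x) (hC : IntegrableOn (cosTransform f) (Ioi 0)) :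
    HilbertAt f x (1 / π * ∫ s in Ioi 0, sin (x * s) * cosTransform f s) := by
  have hint : IntegrableOn (fun s => sin (x * s) * cosTransform f s) (Ioi 0) :=
    hC.bdd_mul (by fun_prop) (ae_of_all _ fun _ => abs_sin_le_one _)
  simp_rw [← integral_sin_sub_mul_of_even hf heven x] at hint ⊢
  exact hilbertAt_integral_integral_sin hf hd hint

end CosineTransform

section HilbertQuotient

lemma integral_cos_mul_eq_mul_sinc (x s : ℝ) : ∫ r in 0..s, cos (x * r) = s * sinc (x * s) := by
  rcases eq_or_ne x 0 with rfl | hx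
  · simp
  rw [intervalIntegral.integral_comp_mul_left _ hx, integral_cos, smul_eq_mul]
  rcases eq_or_ne s 0 with rfl | hs
  · simp
  rw [sinc_of_ne_zero (mul_ne_zero hx hs)]
  field_simp
  simp

lemma integral_mul_sinc_mul {f : ℝ → ℝ} (hf : Integrable f) (s : ℝ) :
    ∫ x, s * sinc (x * s) * f x = ∫ r in 0..s, cosTransform f r := by
  have : IsFiniteMeasure (volume.restrict (uIoc 0 s)) := by
    rw [uIoc]
    infer_instance
  have hprod : Integrable (Function.uncurry fun r x => cos (x * r) * f x)
      ((volume.restrict (uIoc 0 s)).prod volume) :=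
    hf.comp_snd _ |>.bdd_mul (c := 1) (by fun_prop) (ae_of_all _ fun _ => abs_cos_le_one _)
  simp only [cosTransform]
  rw [intervalIntegral_integral_swap hprod]
  simp only [intervalIntegral.integral_mul_const, integral_cos_mul_eq_mul_sinc]

lemma integral_Ioi_mul_intervalIntegral {f : ℝ → ℝ} {a : ℝ} (hf : Continuous f)
    (hint : IntegrableOn f (Ioi a)) :
    ∫ s in Ioi a, f s * ∫ r in a..s, f r = (∫ s in Ioi a, f s) ^ 2 / 2 := by
  have hlim := intervalIntegral_tendsto_integral_Ioi a hint tendsto_id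
  have hprimitive : ∀ s, HasDerivAt (fun s => ∫ r in a..s, f r) (f s) s := fun s =>
    (hf.integral_hasStrictDerivAt a s).hasDerivAt
  have hderiv : ∀ s, HasDerivAt (fun s => (∫ r in a..s, f r) ^ 2 / 2)
      (f s * ∫ r in a..s, f r) s := fun s => by
    refine (((hprimitive s).pow 2).div_const 2).congr_deriv ?_
    ring
  have hbound : ∀ s ∈ Ioi a, ‖∫ r in a..s, f r‖ ≤ ∫ r in Ioi a, ‖f r‖ := fun s hs => by
    rw [intervalIntegral.integral_of_le (le_of_lt hs)]
    exact (norm_integral_le_integral_norm _).trans (setIntegral_mono_set hint.norm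
      (ae_of_all _ fun _ => norm_nonneg _) Ioc_subset_Ioi_self.eventuallyLE)
  have hcont : Continuous fun s => ∫ r in a..s, f r :=
    continuous_iff_continuousAt.2 fun s => (hprimitive s).continuousAt
  have hprod : IntegrableOn (fun s => f s * ∫ r in a..s, f r) (Ioi a) :=
    hint.mul_bdd hcont.aestronglyMeasurable
      ((ae_restrict_iff' measurableSet_Ioi).2 (ae_of_all _ hbound))
  simpa using integral_Ioi_of_hasDerivAt_of_tendsto' (fun s _ => hderiv s) hprod
    ((hlim.pow 2).div_const 2)

/-- The continuous extension to `x = 0` of `x ↦ Hf(x) / x`, for an even function `f` with Hilbert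
transform `Hf`. -/
noncomputable def hilbertQuotient (f : ℝ → ℝ) (x : ℝ) : ℝ :=
  1 / π * ∫ s in Ioi 0, s * sinc (x * s) * cosTransform f s

variable {f : ℝ → ℝ}

lemma mul_sinc_mul (x s : ℝ) : x * (s * sinc (x * s)) = sin (x * s) := by
  rcases eq_or_ne (x * s) 0 with h | h
  · simp [h]
  · rw [← mul_assoc, sinc_of_ne_zero h, mul_div_cancel₀ _ h]

lemma hilbertAt_mul_hilbertQuotient {x : ℝ} (hf : Integrable f) (heven : f.Even)
    (hd : DifferentiableAt ℝ f x) (hC : IntegrableOn (cosTransform f) (Ioi 0)) :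
    HilbertAt f x (x * hilbertQuotient f x) := by
  convert hilbertAt_of_even hf heven hd hC using 1
  rw [hilbertQuotient, mul_left_comm, ← integral_const_mul x]
  simp only [← mul_sinc_mul x, mul_assoc]

lemma norm_mul_sinc_mul_le (s y c : ℝ) : ‖s * sinc y * c‖ ≤ ‖s * c‖ := by
  rw [mul_right_comm, norm_mul]
  exact mul_le_of_le_one_right (norm_nonneg _) (abs_sinc_le_one y)

lemma continuous_hilbertQuotient (hf : Integrable f)
    (hC : IntegrableOn (fun s => s * cosTransform f s) (Ioi 0)) :
    Continuous (hilbertQuotient f) := by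
  have := continuous_cosTransform hf
  have := continuous_sinc
  exact continuous_const.mul (continuous_of_dominated (fun x => by fun_prop)
    (fun x => ae_of_all _ fun s => norm_mul_sinc_mul_le s (x * s) _) hC.norm
    (ae_of_all _ fun s => by fun_prop))

lemma integrable_prod_sinc (hf : Integrable f)
    (hC : IntegrableOn (fun s => s * cosTransform f s) (Ioi 0)) :
    Integrable (Function.uncurry fun x s => f x * (s * sinc (x * s) * cosTransform f s))
      (volume.prod (volume.restrict (Ioi 0))) := by
  have := continuous_cosTransform hf
  have := continuous_sinc
  refine (hf.mul_prod hC).mono (hf.1.comp_fst.mul (by fun_prop)) (ae_of_all _ fun p => ?_)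
  simp only [Function.uncurry, norm_mul (f p.1)]
  gcongr
  exact norm_mul_sinc_mul_le _ _ _

lemma integrable_mul_hilbertQuotient (hf : Integrable f)
    (hC : IntegrableOn (fun s => s * cosTransform f s) (Ioi 0)) :
    Integrable fun x => f x * hilbertQuotient f x := by
  refine ((integrable_prod_sinc hf hC).integral_prod_left.const_mul (1 / π)).congr
    (ae_of_all _ fun x => ?_)
  simp only [Function.uncurry, integral_const_mul, hilbertQuotient]
  ring

lemma integral_mul_hilbertQuotient (hf : Integrable f) (heven : f.Even) (hcont : ContinuousAt f 0)
    (hC : IntegrableOn (fun s => s * cosTransform f s) (Ioi 0)) :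
    ∫ x, f x * hilbertQuotient f x = π / 2 * f 0 ^ 2 := by
  have hint := integrable_cosTransform_of_integrableOn_mul hf hC
  calc ∫ x, f x * hilbertQuotient f x
      = 1 / π * ∫ x, ∫ s in Ioi 0, f x * (s * sinc (x * s) * cosTransform f s) := by
        simp only [← integral_const_mul, hilbertQuotient, mul_left_comm (1 / π)]
    _ = 1 / π * ∫ s in Ioi 0, ∫ x, f x * (s * sinc (x * s) * cosTransform f s) := by
        rw [integral_integral_swap (integrable_prod_sinc hf hC)]
    _ = 1 / π * ∫ s in Ioi 0, cosTransform f s * ∫ r in 0..s, cosTransform f r := by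
        simp only [← integral_mul_sinc_mul hf, ← integral_const_mul, mul_comm, mul_left_comm]
    _ = 1 / π * ((π * f 0) ^ 2 / 2) := by
        rw [integral_Ioi_mul_intervalIntegral (continuous_cosTransform hf) hint.integrableOn,
          integral_Ioi_cosTransform hf heven hcont hint]
    _ = π / 2 * f 0 ^ 2 := by field_simp

end HilbertQuotient

section Primitive

variable {E : Type*} [NormedAddCommGroup E] [NormedSpace ℝ E]

-- For `x ≥ 0`, integrate over `Ioi x` instead: on either half-line `‖x‖ ≤ ‖y‖`.
lemma norm_pow_mul_norm_integral_Iic_le {f : ℝ → E} {k : ℕ} (hf : Integrable f)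
    (hfk : Integrable fun y => ‖y‖ ^ k * ‖f y‖) (h0 : ∫ y, f y = 0) (x : ℝ) :
    ‖x‖ ^ k * ‖∫ y in Iic x, f y‖ ≤ ∫ y, ‖y‖ ^ k * ‖f y‖ := by
  have htail : ∀ t : Set ℝ, MeasurableSet t → (∀ y ∈ t, ‖x‖ ≤ ‖y‖) →
      ‖x‖ ^ k * ‖∫ y in t, f y‖ ≤ ∫ y, ‖y‖ ^ k * ‖f y‖ := fun t ht hle => calc
    ‖x‖ ^ k * ‖∫ y in t, f y‖ ≤ ‖x‖ ^ k * ∫ y in t, ‖f y‖ := by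
        gcongr
        exact norm_integral_le_integral_norm _
    _ = ∫ y in t, ‖x‖ ^ k * ‖f y‖ := (integral_const_mul _ _).symm
    _ ≤ ∫ y in t, ‖y‖ ^ k * ‖f y‖ :=
        setIntegral_mono_on (hf.norm.const_mul _).integrableOn hfk.integrableOn ht fun y hy => by
          gcongr
          exact hle y hy
    _ ≤ ∫ y, ‖y‖ ^ k * ‖f y‖ := setIntegral_le_integral hfk (ae_of_all _ fun y => by positivity)
  have hsplit := intervalIntegral.integral_Iic_add_Ioi (b := x) hf.integrableOn hf.integrableOn
  simp only [Real.norm_eq_abs] at htail ⊢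
  rcases le_total x 0 with hx | hx
  · refine htail _ measurableSet_Iic fun y (hy : y ≤ x) => ?_
    rw [abs_of_nonpos hx, abs_of_nonpos (hy.trans hx)]
    exact neg_le_neg hy
  · rw [eq_neg_of_add_eq_zero_left (hsplit.trans h0), norm_neg]
    exact htail _ measurableSet_Ioi fun y (hy : x < y) => abs_le_abs_of_nonneg hx hy.le

lemma hasDerivAt_integral_Iic [CompleteSpace E] {f : ℝ → E} (hf : Integrable f)
    (hcont : Continuous f) (x : ℝ) : HasDerivAt (fun x => ∫ y in Iic x, f y) (f x) x := by
  have h : (fun x => ∫ y in Iic x, f y) = fun x => (∫ y in Iic 0, f y) + ∫ y in 0..x, f y := by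
    ext x
    rw [← intervalIntegral.integral_Iic_sub_Iic hf.integrableOn hf.integrableOn,
      add_sub_cancel]
  rw [h]
  exact ((hcont.integral_hasStrictDerivAt 0 x).hasDerivAt).const_add _

lemma exists_schwartzMap_deriv_eq [CompleteSpace E] (f : 𝓢(ℝ, E)) (h0 : ∫ x, f x = 0) :
    ∃ F : 𝓢(ℝ, E), deriv F = f := by
  have hderiv : deriv (fun x => ∫ y in Iic x, f y) = f :=
    funext fun x => (hasDerivAt_integral_Iic f.integrable f.continuous x).deriv
  have hdecay : ∀ k n : ℕ, ∃ C, ∀ x,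
      ‖x‖ ^ k * ‖iteratedFDeriv ℝ n (fun x => ∫ y in Iic x, f y) x‖ ≤ C := by
    rintro k (_ | n)
    · exact ⟨_, fun x => by
        simpa only [norm_iteratedFDeriv_zero] using norm_pow_mul_norm_integral_Iic_le f.integrable
          (f.integrable_pow_mul volume k) h0 x⟩
    · obtain ⟨C, -, hC⟩ := f.decay k n
      exact ⟨C, fun x => by
        simpa only [norm_iteratedFDeriv_eq_norm_iteratedDeriv, iteratedDeriv_succ', hderiv]
          using hC x⟩
  exact ⟨⟨_, contDiff_infty_iff_deriv.2
    ⟨fun x => (hasDerivAt_integral_Iic f.integrable f.continuous x).differentiableAt,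
      hderiv.symm ▸ f.smooth'⟩, hdecay⟩, hderiv⟩

end Primitive

section Schwartz

-- Under the Fourier transform, division by `x` becomes integration.
lemma exists_schwartzMap_eq_smul {E : Type*} [NormedAddCommGroup E] [NormedSpace ℂ E]
    [CompleteSpace E] (f : 𝓢(ℝ, E)) (h0 : f 0 = 0) : ∃ g : 𝓢(ℝ, E), ∀ x, f x = x • g x := by
  have hint : ∫ ξ, (𝓕⁻ f) ξ = 0 := by
    rw [← h0]
    conv_rhs => rw [← FourierTransform.fourier_fourierInv_eq (F := 𝓢(ℝ, E)) f,
      SchwartzMap.fourier_coe, Real.fourier_eq]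
    simp
  obtain ⟨F, hF⟩ := exists_schwartzMap_deriv_eq (𝓕⁻ f) hint
  refine ⟨(2 * π * Complex.I) • 𝓕 F, fun x => ?_⟩
  have h := congrFun (Real.fourier_deriv F.integrable F.differentiable
    (hF ▸ (𝓕⁻ f).integrable)) x
  rw [hF, ← SchwartzMap.fourier_coe, FourierTransform.fourier_fourierInv_eq,
    ← SchwartzMap.fourier_coe] at h
  rw [h, smul_apply, mul_smul, smul_comm, Complex.coe_smul]

lemma exists_schwartzMap_eq_mul (f : 𝓢(ℝ, ℝ)) (h0 : f 0 = 0) :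
    ∃ g : 𝓢(ℝ, ℝ), ∀ x, f x = x * g x := by
  obtain ⟨g, hg⟩ := exists_schwartzMap_eq_smul (f.postcompCLM Complex.ofRealCLM) (by simp [h0])
  refine ⟨g.postcompCLM Complex.reCLM, fun x => ?_⟩
  simpa using congrArg Complex.re (hg x)

lemma integrable_pow_mul_cosTransform (f : 𝓢(ℝ, ℝ)) (k : ℕ) :
    Integrable fun s => s ^ k * cosTransform f s := by
  have hF := ((𝓕 (f.postcompCLM Complex.ofRealCLM)).integrable_pow_mul volume k).comp_div
    two_pi_pos.ne'
  have hmeas : AEStronglyMeasurable (fun s => s ^ k * cosTransform f s) :=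
    ((continuous_id.pow k).mul (continuous_cosTransform f.integrable)).aestronglyMeasurable
  refine (hF.const_mul ((2 * π) ^ k)).mono' hmeas (ae_of_all _ fun s => ?_)
  rw [cosTransform_eq_re_fourier f.integrable, norm_mul, norm_pow, norm_div, div_pow,
    Real.norm_of_nonneg two_pi_pos.le, ← mul_assoc, mul_div_cancel₀ _ (by positivity)]
  gcongr
  rw [SchwartzMap.fourier_coe]
  exact Complex.abs_re_le_norm _

end Schwartz

theorem integral_velocity_cancellation_cubic_general {ω q ux : ℝ → ℝ} (hω : ∀ x, ω x = x * q x)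
    (heven : q.Even) (hdiff : Differentiable ℝ q) (hq : Integrable q)
    (hC : IntegrableOn (fun s => s * cosTransform q s) (Ioi 0))
    (hH : ∀ x : ℝ, HilbertAt ω x (ux x)) :
    ∃ g : ℝ → ℝ, Continuous g ∧
      (∀ x : ℝ, x ≠ 0 → g x = (ux x - ux 0) * ω x / x ^ 3) ∧
      Integrable g ∧
      (∫ x : ℝ, g x = (π / 2) * (deriv ω 0) ^ 2) ∧
      (0 ≤ ∫ x : ℝ, g x) ∧
      (deriv ω 0 = 0 → ∫ x : ℝ, g x = 0) := by
  obtain rfl : ω = fun x => x * q x := funext hω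
  have hderiv : deriv (fun x => x * q x) 0 = q 0 := by
    simpa using ((hasDerivAt_id (0 : ℝ)).fun_mul (hdiff 0).hasDerivAt).deriv
  have hint : IntegrableOn (cosTransform q) (Ioi 0) :=
    (integrable_cosTransform_of_integrableOn_mul hq hC).integrableOn
  have hux : ∀ x, ux x = x * (x * hilbertQuotient q x) - 1 / π * ∫ y, q y := fun x =>
    (hH x).unique ((hilbertAt_mul_hilbertQuotient hq heven (hdiff x) hint).id_mul hq)
  have hintegral := integral_mul_hilbertQuotient hq heven (hdiff 0).continuousAt hC
  refine ⟨fun x => q x * hilbertQuotient q x,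
    hdiff.continuous.mul (continuous_hilbertQuotient hq hC), fun x hx => ?_,
    integrable_mul_hilbertQuotient hq hC, ?_, ?_, ?_⟩
  · rw [hux x, hux 0]
    field_simp
    ring
  · rw [hintegral, hderiv]
  · rw [hintegral]
    positivity
  · rw [hintegral, hderiv]
    intro h
    simp [h]

/-- For an odd Schwartz function `ω` with `u_x = Hω`, the function
`x ↦ (u_x(x) − u_x(0))·ω(x)/x³` extends continuously to `0`, is integrable,
and its integral equals `(π/2)·ω'(0)²`; in particular it is nonnegative and
vanishes if `ω'(0) = 0`. -/
theorem integral_velocity_cancellation_cubic (ω : SchwartzMap ℝ ℝ)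
    (hodd : ∀ x : ℝ, ω (-x) = -ω x) (ux : ℝ → ℝ)
    (hH : ∀ x : ℝ, HilbertAt (fun y => ω y) x (ux x)) :
    ∃ g : ℝ → ℝ, Continuous g ∧
      (∀ x : ℝ, x ≠ 0 → g x = (ux x - ux 0) * ω x / x^3) ∧
      Integrable g ∧
      (∫ x : ℝ, g x = (Real.pi / 2) * (deriv (fun y => ω y) 0)^2) ∧
      (0 ≤ ∫ x : ℝ, g x) ∧
      (deriv (fun y => ω y) 0 = 0 → ∫ x : ℝ, g x = 0) := by
  have h0 : ω 0 = 0 := self_eq_neg.1 (by simpa using hodd 0)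
  obtain ⟨q, hq⟩ := exists_schwartzMap_eq_mul ω h0
  have heven : Function.Even q := fun x => by
    rcases eq_or_ne x 0 with rfl | hx
    · rw [neg_zero]
    · have h := hodd x
      rw [hq, hq, neg_mul, neg_inj] at h
      exact mul_left_cancel₀ hx h
  exact integral_velocity_cancellation_cubic_general hq heven q.differentiable q.integrable
    (by simpa using (integrable_pow_mul_cosTransform q 1).integrableOn) hH
end
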